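/- Let n ≥ 2 and let S̃'_n be the presented group with generators z' and τ̃'_{i,j} for 0 ≤ i ≠ j ≤ n−1 and relations: z'·z' = 1; z'·τ̃'_{i,j} = τ̃'_{i,j}·z'; τ̃'_{i,j} = z'·τ̃'_{j,i}; τ̃'_{i,j}·τ̃'_{i,j} = z' for all i ≠ j; τ̃'_{i,j}·τ̃'_{k,l} = z'·τ̃'_{k,l}·τ̃'_{i,j} whenever {i,j} ∩ {k,l} = ∅; and τ̃'_{i,j}·τ̃'_{j,k}·τ̃'_{i,j} = τ̃'_{j,k}·τ̃'_{i,j}·τ̃'_{j,k} = τ̃'_{i,k} for all pairwise distinct i, j, k. Then there is a group isomorphism φ : S̃_n → S̃'_n with φ(τ̃_i) = τ̃'_{i,i+1} for 0 ≤ i ≤ n−2 and φ(z) = z', and moreover φ(τ̃_{i,j}) = τ̃'_{i,j} for all 0 ≤ i < j ≤ n−1. -/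

import Mathlib

open Equiv

/-- Generator `z` as an element of the free group. -/
def zF (n : ℕ) : FreeGroup (Fin (n-1) ⊕ Unit) := FreeGroup.of (Sum.inr ())

/-- Generator `τ̃ᵢ` as an element of the free group. -/
def tF (n : ℕ) (i : Fin (n-1)) : FreeGroup (Fin (n-1) ⊕ Unit) := FreeGroup.of (Sum.inl i)

/-- Relations of the spin extension of the symmetric group. -/
def spinRels (n : ℕ) : Set (FreeGroup (Fin (n-1) ⊕ Unit)) :=
  {zF n * zF n} ∪
  {w | ∃ i : Fin (n-1), w = zF n * tF n i * (tF n i * zF n)⁻¹} ∪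
  {w | ∃ i : Fin (n-1), w = tF n i * tF n i * (zF n)⁻¹} ∪
  {w | ∃ i j : Fin (n-1), 1 < |(i : ℤ) - (j : ℤ)| ∧ w = tF n i * tF n j * (zF n * tF n j * tF n i)⁻¹} ∪
  {w | ∃ i j : Fin (n-1), (j : ℕ) = (i : ℕ) + 1 ∧
        w = tF n i * tF n j * tF n i * (tF n j * tF n i * tF n j)⁻¹}

/-- The spin extension `S̃ₙ` of the symmetric group, as a presented group. -/
abbrev SpinSym (n : ℕ) := PresentedGroup (spinRels n)

/-- The central element `z` of `S̃ₙ`. -/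
def zt (n : ℕ) : SpinSym n := PresentedGroup.of (Sum.inr ())

/-- The generator `τ̃ᵢ` of `S̃ₙ`. -/
def tt (n : ℕ) (i : Fin (n-1)) : SpinSym n := PresentedGroup.of (Sum.inl i)

/-- `i` as an element of `Fin n`. -/
def finL (n : ℕ) (i : Fin (n-1)) : Fin n := ⟨i, by have := i.2; omega⟩

/-- `i+1` as an element of `Fin n`. -/
def finR (n : ℕ) (i : Fin (n-1)) : Fin n := ⟨(i : ℕ) + 1, by have := i.2; omega⟩

/-- `τ̃ₖ` for a natural number index, `1` out of range. -/
def ttN (n : ℕ) (k : ℕ) : SpinSym n := if h : k < n - 1 then tt n ⟨k, h⟩ else 1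

/-- For `i ≤ j`, the word `τ̃ᵢ·τ̃ᵢ₊₁⋯τ̃ⱼ₋₂·τ̃ⱼ₋₁·τ̃ⱼ₋₂⋯τ̃ᵢ₊₁·τ̃ᵢ` (equal to `1` when `i = j`). -/
def ttilCore (n i j : ℕ) : SpinSym n :=
  (((List.range' i (j - i)) ++ (List.range' i (j - 1 - i)).reverse).map (ttN n)).prod

/-- The lifted transpositions `τ̃_{i,j}`, with `τ̃_{j,i} = z·τ̃_{i,j}` for `i < j`,
and `τ̃_{k,k} = 1`. -/
def ttil (n i j : ℕ) : SpinSym n := if j < i then zt n * ttilCore n j i else ttilCore n i j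

/-- Generator `z'` of the second presentation, in the free group. -/
def zF2 (n : ℕ) : FreeGroup ({q : Fin n × Fin n // q.1 ≠ q.2} ⊕ Unit) :=
  FreeGroup.of (Sum.inr ())

/-- Generator `τ̃'_{i,j}` of the second presentation, in the free group. -/
def tF2 (n : ℕ) (i j : Fin n) (h : i ≠ j) :
    FreeGroup ({q : Fin n × Fin n // q.1 ≠ q.2} ⊕ Unit) :=
  FreeGroup.of (Sum.inl ⟨(i, j), h⟩)

/-- Relations of the second presentation of the spin extension. -/
def spinRels2 (n : ℕ) : Set (FreeGroup ({q : Fin n × Fin n // q.1 ≠ q.2} ⊕ Unit)) :=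
  {zF2 n * zF2 n} ∪
  {w | ∃ (i j : Fin n) (h : i ≠ j), w = zF2 n * tF2 n i j h * (tF2 n i j h * zF2 n)⁻¹} ∪
  {w | ∃ (i j : Fin n) (h : i ≠ j), w = tF2 n i j h * (zF2 n * tF2 n j i (Ne.symm h))⁻¹} ∪
  {w | ∃ (i j : Fin n) (h : i ≠ j), w = tF2 n i j h * tF2 n i j h * (zF2 n)⁻¹} ∪
  {w | ∃ (i j k l : Fin n) (hij : i ≠ j) (hkl : k ≠ l),
        i ≠ k ∧ i ≠ l ∧ j ≠ k ∧ j ≠ l ∧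
        w = tF2 n i j hij * tF2 n k l hkl * (zF2 n * tF2 n k l hkl * tF2 n i j hij)⁻¹} ∪
  {w | ∃ (i j k : Fin n) (hij : i ≠ j) (hjk : j ≠ k) (hik : i ≠ k),
        w = tF2 n i j hij * tF2 n j k hjk * tF2 n i j hij * (tF2 n i k hik)⁻¹} ∪
  {w | ∃ (i j k : Fin n) (hij : i ≠ j) (hjk : j ≠ k) (hik : i ≠ k),
        w = tF2 n j k hjk * tF2 n i j hij * tF2 n j k hjk * (tF2 n i k hik)⁻¹}

/-- The second presented group `S̃'ₙ`. -/
abbrev SpinSym2 (n : ℕ) := PresentedGroup (spinRels2 n)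

/-- The element `z'` of `S̃'ₙ`. -/
def zt2 (n : ℕ) : SpinSym2 n := PresentedGroup.of (Sum.inr ())

/-- The generator `τ̃'_{i,j}` of `S̃'ₙ`. -/
def tt2 (n : ℕ) (i j : Fin n) (h : i ≠ j) : SpinSym2 n :=
  PresentedGroup.of (Sum.inl ⟨(i, j), h⟩)

/-!
Each `τ̃_{i,j}` squares to the central involution `z`, so `x ↦ a x a` with `a = τ̃_{i,j}` is
conjugation by `a` multiplied by `z`. These maps are involutions, they inherit the braid relation,
and two of them commute as soon as one fixes the element defining the other; this yields
`τ̃_{a,b} τ̃_{i,j} τ̃_{a,b} = τ̃_{s i, s j}` for the transposition `s = (a b)`. The relations of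
`S̃'ₙ` between the `τ̃_{i,j}` are special cases, so `τ̃'_{i,j} ↦ τ̃_{i,j}` is a homomorphism, and
it is inverse to `τ̃ᵢ ↦ τ̃'_{i,i+1}`.
-/

/-- The product `a * x * a`: the conjugation `z * (a * x * a⁻¹)` twisted by `z` when `a * a = z` for
a central involution `z`. It is written without inverses, as in the relations of `S̃'ₙ`. -/
def sandwich {M : Type*} [Mul M] (a x : M) : M := a * x * a

theorem map_sandwich {M N : Type*} [Mul M] [Mul N] {F : Type*} [FunLike F M N] [MulHomClass F M N]
    (f : F) (a x : M) : f (sandwich a x) = sandwich (f a) (f x) := by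
  simp only [sandwich, map_mul]

section Semigroup

variable {M : Type*} [Semigroup M] {z a b : M}

theorem sandwich_sandwich (a b x : M) :
    sandwich (sandwich a b) x = sandwich a (sandwich b (sandwich a x)) := by
  simp only [sandwich, mul_assoc]

theorem sandwich_self (ha : a * a = z) : sandwich a a = z * a := by
  rw [sandwich, ha]

theorem sandwich_mul_of_commute (hza : Commute z a) (x : M) :
    sandwich a (z * x) = z * sandwich a x := by
  simp only [sandwich, ← mul_assoc, hza.eq]

theorem sandwich_braid (h : sandwich a b = sandwich b a) (x : M) :
    sandwich a (sandwich b (sandwich a x)) = sandwich b (sandwich a (sandwich b x)) := by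
  rw [← sandwich_sandwich, h, sandwich_sandwich]

theorem sandwich_left_comm (ha : (sandwich a).Involutive) (hab : sandwich a b = b) (x : M) :
    sandwich a (sandwich b x) = sandwich b (sandwich a x) := by
  have h := sandwich_sandwich a b (sandwich a x)
  rw [hab, ha x] at h
  exact h.symm

end Semigroup

section Monoid

variable {M : Type*} [Monoid M] {z a b : M}

theorem mul_sandwich_of_commute {x : M} (hzax : Commute z (a * x)) (hzz : z * z = 1) :
    sandwich (z * a) x = sandwich a x := by
  calc z * a * x * (z * a) = z * ((a * x) * z) * a := by simp only [mul_assoc]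
    _ = z * z * (a * x * a) := by rw [← hzax.eq]; simp only [mul_assoc]
    _ = a * x * a := by rw [hzz, one_mul]

theorem sandwich_involutive (hz : ∀ y, Commute z y) (hzz : z * z = 1) (ha : a * a = z) :
    (sandwich a).Involutive := fun x => by
  calc a * (a * x * a) * a = a * a * x * (a * a) := by simp only [mul_assoc]
    _ = x := by rw [ha, (hz x).eq, mul_assoc, hzz, mul_one]

theorem sandwich_mul_sandwich (hzb : Commute z b) (hzz : z * z = 1) (ha : a * a = z)
    (hb : b * b = z) : sandwich a b * sandwich a b = z := by
  calc a * b * a * (a * b * a) = a * (b * (a * a) * b) * a := by simp only [mul_assoc]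
    _ = z := by rw [ha, ← hzb.eq, mul_assoc z, hb, hzz, mul_one, ha]

theorem sandwich_eq_self_iff (hzb : Commute z b) (hzz : z * z = 1) (ha : a * a = z) :
    sandwich a b = b ↔ a * b = z * b * a := by
  have hza : Commute z a := by
    rw [← ha]
    exact (Commute.refl a).mul_left (Commute.refl a)
  constructor <;> intro h
  · calc a * b = z * z * (a * b) := by rw [hzz, one_mul]
      _ = z * (a * b * z) := by rw [mul_assoc, (hza.mul_right hzb).eq]
      _ = z * (a * b * a) * a := by rw [← ha]; simp only [mul_assoc]
      _ = z * b * a := by rw [← sandwich, h]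
  · rw [sandwich, h, hzb.eq, mul_assoc, mul_assoc, ha, hzz, mul_one]

end Monoid

@[elab_as_elim]
theorem decreasing_induction_lt {j : ℕ} {motive : ∀ i, i < j → Prop}
    (base : ∀ i (h : i + 1 = j), motive i (Nat.lt_of_succ_le h.le))
    (step : ∀ i (h : i + 1 < j), motive (i + 1) h → motive i (i.lt_succ_self.trans h))
    {i : ℕ} (hij : i < j) : motive i hij := by
  obtain _ | b := j
  · omega
  · induction Nat.le_of_lt_succ hij using Nat.decreasingInduction with
    | self => exact base b rfl
    | of_succ i h ih => exact step i (Nat.succ_lt_succ h) (ih _)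

section SpinSym

variable {n : ℕ}

theorem zt_mul_zt : zt n * zt n = 1 :=
  PresentedGroup.one_of_mem (x := zF n * zF n) (Or.inl <| Or.inl <| Or.inl <| Or.inl rfl)

theorem zt_mul_tt (i : Fin (n - 1)) : zt n * tt n i = tt n i * zt n :=
  PresentedGroup.mk_eq_mk_of_mul_inv_mem (x := zF n * tF n i) (y := tF n i * zF n)
    (Or.inl <| Or.inl <| Or.inl <| Or.inr ⟨i, rfl⟩)

theorem tt_mul_self (i : Fin (n - 1)) : tt n i * tt n i = zt n :=
  PresentedGroup.mk_eq_mk_of_mul_inv_mem (x := tF n i * tF n i) (y := zF n)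
    (Or.inl <| Or.inl <| Or.inr ⟨i, rfl⟩)

theorem tt_mul_tt_of_far {i j : Fin (n - 1)} (h : 1 < |(i : ℤ) - (j : ℤ)|) :
    tt n i * tt n j = zt n * tt n j * tt n i :=
  PresentedGroup.mk_eq_mk_of_mul_inv_mem (x := tF n i * tF n j) (y := zF n * tF n j * tF n i)
    (Or.inl <| Or.inr ⟨i, j, h, rfl⟩)

theorem tt_braid {i j : Fin (n - 1)} (h : (j : ℕ) = i + 1) :
    tt n i * tt n j * tt n i = tt n j * tt n i * tt n j :=
  PresentedGroup.mk_eq_mk_of_mul_inv_mem (x := tF n i * tF n j * tF n i)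
    (y := tF n j * tF n i * tF n j) (Or.inr ⟨i, j, h, rfl⟩)

theorem commute_zt (x : SpinSym n) : Commute (zt n) x := by
  suffices h : x ∈ Subgroup.centralizer {zt n} from
    (Subgroup.mem_centralizer_singleton_iff.1 h).symm
  refine PresentedGroup.generated_by _ _ ?_ x
  rintro (i | _)
  · exact Subgroup.mem_centralizer_singleton_iff.2 (zt_mul_tt i).symm
  · exact Subgroup.mem_centralizer_singleton_iff.2 rfl

theorem ttN_of_lt {k : ℕ} (hk : k + 1 < n) : ttN n k = tt n ⟨k, Nat.lt_sub_of_add_lt hk⟩ :=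
  dif_pos _

theorem ttN_mul_self {k : ℕ} (hk : k + 1 < n) : ttN n k * ttN n k = zt n := by
  rw [ttN_of_lt hk, tt_mul_self]

theorem sandwich_ttN_involutive {k : ℕ} (hk : k + 1 < n) : (sandwich (ttN n k)).Involutive :=
  sandwich_involutive commute_zt zt_mul_zt (ttN_mul_self hk)

theorem sandwich_ttN_ttN_of_far {k l : ℕ} (hk : k + 1 < n) (hl : l + 1 < n)
    (h : k + 1 < l ∨ l + 1 < k) : sandwich (ttN n k) (ttN n l) = ttN n l := by
  rw [sandwich_eq_self_iff (commute_zt _) zt_mul_zt (ttN_mul_self hk), ttN_of_lt hk, ttN_of_lt hl]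
  apply tt_mul_tt_of_far
  rw [lt_abs]
  dsimp only
  omega

theorem sandwich_ttN_ttN_comm {k : ℕ} (hk : k + 2 < n) :
    sandwich (ttN n k) (ttN n (k + 1)) = sandwich (ttN n (k + 1)) (ttN n k) := by
  rw [ttN_of_lt hk, ttN_of_lt (Nat.lt_of_succ_lt hk)]
  exact tt_braid rfl

theorem ttilCore_succ (n i : ℕ) : ttilCore n i (i + 1) = ttN n i := by
  simp [ttilCore]

theorem ttilCore_eq_sandwich {i j : ℕ} (h : i + 1 < j) :
    ttilCore n i j = sandwich (ttN n i) (ttilCore n (i + 1) j) := by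
  have range_eq_cons {m : ℕ} (hm : i < m) :
      List.range' i (m - i) = i :: List.range' (i + 1) (m - (i + 1)) := by
    rw [← List.range'_succ, Nat.sub_add_eq, Nat.sub_add_cancel (Nat.sub_pos_of_lt hm)]
  rw [ttilCore, range_eq_cons (i.lt_succ_self.trans h), range_eq_cons (Nat.lt_sub_of_add_lt h)]
  simp [ttilCore, sandwich, mul_assoc]

theorem ttilCore_mul_self {i j : ℕ} (hij : i < j) (hj : j < n) :
    ttilCore n i j * ttilCore n i j = zt n := by
  induction hij using decreasing_induction_lt with
  | base i h =>
    subst h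
    rw [ttilCore_succ, ttN_mul_self hj]
  | step i h ih =>
    rw [ttilCore_eq_sandwich h]
    exact sandwich_mul_sandwich (commute_zt _) zt_mul_zt (ttN_mul_self (h.trans hj)) ih

theorem sandwich_ttN_ttilCore_of_far {i j k : ℕ} (hij : i < j) (hj : j < n) (hk : k + 1 < n)
    (h : k + 1 < i ∨ j < k) : sandwich (ttN n k) (ttilCore n i j) = ttilCore n i j := by
  induction hij using decreasing_induction_lt with
  | base i h' =>
    subst h'
    rw [ttilCore_succ, sandwich_ttN_ttN_of_far hk hj h]
  | step i h' ih =>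
    rw [ttilCore_eq_sandwich h',
      sandwich_left_comm (sandwich_ttN_involutive hk)
        (sandwich_ttN_ttN_of_far hk (h'.trans hj) (by omega)),
      ih (by omega)]

theorem sandwich_ttN_ttilCore_of_between {i j k : ℕ} (hik : i < k) (hkj : k + 1 < j) (hj : j < n) :
    sandwich (ttN n k) (ttilCore n i j) = ttilCore n i j := by
  induction hik using decreasing_induction_lt with
  | base i h =>
    subst h
    have hi : i + 2 < n := by omega
    rw [ttilCore_eq_sandwich (i := i) (by omega), ttilCore_eq_sandwich (i := i + 1) hkj,
      ← sandwich_braid (sandwich_ttN_ttN_comm hi),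
      sandwich_ttN_ttilCore_of_far hkj hj (by omega) (by omega)]
  | step i h ih =>
    rw [ttilCore_eq_sandwich (by omega),
      sandwich_left_comm (sandwich_ttN_involutive (by omega))
        (sandwich_ttN_ttN_of_far (by omega) (by omega) (by omega)),
      ih]

theorem sandwich_ttN_ttilCore_right {i j : ℕ} (hij : i < j) (hj : j + 1 < n) :
    sandwich (ttN n j) (ttilCore n i j) = ttilCore n i (j + 1) := by
  induction hij using decreasing_induction_lt with
  | base i h =>
    subst h
    rw [ttilCore_eq_sandwich (i + 1).lt_succ_self, ttilCore_succ, ttilCore_succ,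
      sandwich_ttN_ttN_comm hj]
  | step i h ih =>
    rw [ttilCore_eq_sandwich h, ttilCore_eq_sandwich (h.trans j.lt_succ_self),
      sandwich_left_comm (sandwich_ttN_involutive hj)
        (sandwich_ttN_ttN_of_far hj (h.trans (Nat.lt_of_succ_lt hj)) (Or.inr h)),
      ih]

theorem ttil_of_lt {i j : ℕ} (h : i < j) : ttil n i j = ttilCore n i j :=
  if_neg h.not_gt

theorem ttil_comm {i j : ℕ} (h : i ≠ j) : ttil n i j = zt n * ttil n j i := by
  rcases h.lt_or_gt with h | h <;> simp [ttil, h, h.not_gt, ← mul_assoc, zt_mul_zt]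

theorem ttil_mul_self {i j : Fin n} (h : i ≠ j) : ttil n i j * ttil n i j = zt n := by
  rcases h.lt_or_gt with h | h
  · rw [ttil_of_lt h, ttilCore_mul_self h j.2]
  · rw [ttil_comm (Fin.val_ne_of_ne h.ne'), ttil_of_lt h, ← mul_assoc, (commute_zt _).eq,
      mul_assoc (ttilCore n j i), zt_mul_zt, mul_one, ttilCore_mul_self h i.2]

/-- `x` acts on the lifted transpositions as the permutation `σ`. The action is by
`sandwich x` rather than by conjugation, so that no power of `z` appears. -/
def ActsAs (x : SpinSym n) (σ : Perm (Fin n)) : Prop :=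
  ∀ ⦃i j : Fin n⦄, i ≠ j → sandwich x (ttil n i j) = ttil n (σ i) (σ j)

protected theorem ActsAs.sandwich {x y : SpinSym n} {σ τ : Perm (Fin n)} (hx : ActsAs x σ)
    (hy : ActsAs y τ) : ActsAs (sandwich x y) (σ * τ * σ) := fun i j h => by
  rw [sandwich_sandwich, hx h, hy (σ.injective.ne h), hx (τ.injective.ne (σ.injective.ne h))]
  rfl

theorem ActsAs.sandwich_swap {x y : SpinSym n} {a b c : Fin n} (hx : ActsAs x (swap a b))
    (hy : ActsAs y (swap b c)) (hac : a ≠ c) (hbc : b ≠ c) :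
    ActsAs (sandwich x y) (swap a c) := by
  have h := hx.sandwich hy
  rwa [swap_comm a b, swap_comm b c, swap_mul_swap_mul_swap hbc.symm hac.symm] at h

theorem ActsAs.zt_mul {x : SpinSym n} {σ : Perm (Fin n)} (hx : ActsAs x σ) :
    ActsAs (zt n * x) σ := fun i j h => by
  rw [mul_sandwich_of_commute (commute_zt _) zt_mul_zt, hx h]

theorem actsAs_of_lt {x : SpinSym n} {σ : Perm (Fin n)}
    (h : ∀ i j : Fin n, i < j → sandwich x (ttilCore n i j) = ttil n (σ i) (σ j)) :
    ActsAs x σ := fun i j hij => by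
  rcases hij.lt_or_gt with hlt | hlt
  · rw [ttil_of_lt hlt, h i j hlt]
  · rw [ttil_comm (Fin.val_ne_of_ne hij), ttil_of_lt hlt, sandwich_mul_of_commute (commute_zt x),
      h j i hlt, ← ttil_comm (Fin.val_ne_of_ne (σ.injective.ne hij))]

theorem sandwich_ttN_ttilCore {i j k : ℕ} (hij : i < j) (hj : j < n) (hk : k + 1 < n) :
    sandwich (ttN n k) (ttilCore n i j) = ttil n (swap k (k + 1) i) (swap k (k + 1) j) := by
  have fixed {l : ℕ} (h : l ≠ k) (h' : l ≠ k + 1) : swap k (k + 1) l = l :=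
    swap_apply_of_ne_of_ne h h'
  rcases lt_trichotomy i k with hik | rfl | hki
  · rw [fixed hik.ne (by omega)]
    rcases lt_trichotomy j k with hjk | rfl | hkj
    · rw [fixed hjk.ne (by omega), ttil_of_lt hij,
        sandwich_ttN_ttilCore_of_far hij hj hk (Or.inr hjk)]
    · rw [swap_apply_left, ttil_of_lt (by omega), sandwich_ttN_ttilCore_right hij hk]
    · obtain rfl | hkj := (Nat.succ_le_of_lt hkj).eq_or_lt
      · rw [swap_apply_right, ttil_of_lt hik, ← sandwich_ttN_ttilCore_right hik hk,
          sandwich_ttN_involutive hk]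
      · rw [fixed (by omega) hkj.ne', ttil_of_lt hij, sandwich_ttN_ttilCore_of_between hik hkj hj]
  · rw [swap_apply_left]
    obtain rfl | hij' := (Nat.succ_le_of_lt hij).eq_or_lt
    · rw [swap_apply_right, ttil_comm hij.ne', ttil_of_lt hij, ttilCore_succ,
        sandwich_self (ttN_mul_self hk)]
    · rw [fixed hij.ne' hij'.ne', ttil_of_lt hij', ttilCore_eq_sandwich hij',
        sandwich_ttN_involutive hk]
  · rw [fixed (hki.trans hij).ne' (by omega)]
    obtain rfl | hki' := (Nat.succ_le_of_lt hki).eq_or_lt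
    · rw [swap_apply_right, ttil_of_lt (hki.trans hij), ← ttilCore_eq_sandwich hij]
    · rw [fixed hki.ne' hki'.ne', ttil_of_lt hij,
        sandwich_ttN_ttilCore_of_far hij hj hk (Or.inl hki')]

theorem actsAs_ttN {k : ℕ} (hk : k + 1 < n) :
    ActsAs (ttN n k) (swap ⟨k, Nat.lt_of_succ_lt hk⟩ ⟨k + 1, hk⟩) :=
  actsAs_of_lt fun i j hij => by
    simp only [sandwich_ttN_ttilCore hij j.2 hk, ← Fin.val_injective.swap_apply]

theorem actsAs_ttilCore {a b : ℕ} (hab : a < b) (hb : b < n) :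
    ActsAs (ttilCore n a b) (swap ⟨a, hab.trans hb⟩ ⟨b, hb⟩) := by
  induction hab using decreasing_induction_lt with
  | base a h =>
    cases h
    rw [ttilCore_succ]
    exact actsAs_ttN hb
  | step a h ih =>
    rw [ttilCore_eq_sandwich h]
    exact (actsAs_ttN (h.trans hb)).sandwich_swap ih (by simpa using (a.lt_succ_self.trans h).ne)
      (by simpa using h.ne)

theorem actsAs_ttil {a b : Fin n} (h : a ≠ b) : ActsAs (ttil n a b) (swap a b) := by
  rcases h.lt_or_gt with h | h
  · rw [ttil_of_lt h]
    exact actsAs_ttilCore h b.2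
  · rw [ttil_comm (Fin.val_ne_of_ne h.ne'), ttil_of_lt h, swap_comm]
    exact (actsAs_ttilCore h a.2).zt_mul

theorem ttil_mul_ttil_of_disjoint {i j k l : Fin n} (hij : i ≠ j) (hkl : k ≠ l) (hik : i ≠ k)
    (hil : i ≠ l) (hjk : j ≠ k) (hjl : j ≠ l) :
    ttil n i j * ttil n k l = zt n * ttil n k l * ttil n i j := by
  rw [← sandwich_eq_self_iff (commute_zt _) zt_mul_zt (ttil_mul_self hij), actsAs_ttil hij hkl,
    swap_apply_of_ne_of_ne hik.symm hjk.symm, swap_apply_of_ne_of_ne hil.symm hjl.symm]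

theorem sandwich_ttil_left {i j k : Fin n} (hij : i ≠ j) (hjk : j ≠ k) (hik : i ≠ k) :
    sandwich (ttil n i j) (ttil n j k) = ttil n i k := by
  rw [actsAs_ttil hij hjk, swap_apply_right, swap_apply_of_ne_of_ne hik.symm hjk.symm]

theorem sandwich_ttil_right {i j k : Fin n} (hij : i ≠ j) (hjk : j ≠ k) (hik : i ≠ k) :
    sandwich (ttil n j k) (ttil n i j) = ttil n i k := by
  rw [actsAs_ttil hjk hij, swap_apply_left, swap_apply_of_ne_of_ne hij hik]

end SpinSym

section SpinSym2

variable {n : ℕ} {i j k l : Fin n}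

theorem zt2_mul_zt2 : zt2 n * zt2 n = 1 :=
  PresentedGroup.one_of_mem (x := zF2 n * zF2 n)
    (Or.inl <| Or.inl <| Or.inl <| Or.inl <| Or.inl <| Or.inl rfl)

theorem zt2_mul_tt2 (h : i ≠ j) : zt2 n * tt2 n i j h = tt2 n i j h * zt2 n :=
  PresentedGroup.mk_eq_mk_of_mul_inv_mem (x := zF2 n * tF2 n i j h) (y := tF2 n i j h * zF2 n)
    (Or.inl <| Or.inl <| Or.inl <| Or.inl <| Or.inl <| Or.inr ⟨i, j, h, rfl⟩)

theorem tt2_comm (h : i ≠ j) : tt2 n i j h = zt2 n * tt2 n j i h.symm :=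
  PresentedGroup.mk_eq_mk_of_mul_inv_mem (x := tF2 n i j h) (y := zF2 n * tF2 n j i h.symm)
    (Or.inl <| Or.inl <| Or.inl <| Or.inl <| Or.inr ⟨i, j, h, rfl⟩)

theorem tt2_mul_self (h : i ≠ j) : tt2 n i j h * tt2 n i j h = zt2 n :=
  PresentedGroup.mk_eq_mk_of_mul_inv_mem (x := tF2 n i j h * tF2 n i j h) (y := zF2 n)
    (Or.inl <| Or.inl <| Or.inl <| Or.inr ⟨i, j, h, rfl⟩)

theorem tt2_mul_tt2_of_disjoint (hij : i ≠ j) (hkl : k ≠ l) (hik : i ≠ k) (hil : i ≠ l)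
    (hjk : j ≠ k) (hjl : j ≠ l) :
    tt2 n i j hij * tt2 n k l hkl = zt2 n * tt2 n k l hkl * tt2 n i j hij :=
  PresentedGroup.mk_eq_mk_of_mul_inv_mem (x := tF2 n i j hij * tF2 n k l hkl)
    (y := zF2 n * tF2 n k l hkl * tF2 n i j hij)
    (Or.inl <| Or.inl <| Or.inr ⟨i, j, k, l, hij, hkl, hik, hil, hjk, hjl, rfl⟩)

theorem sandwich_tt2_left (hij : i ≠ j) (hjk : j ≠ k) (hik : i ≠ k) :
    sandwich (tt2 n i j hij) (tt2 n j k hjk) = tt2 n i k hik :=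
  PresentedGroup.mk_eq_mk_of_mul_inv_mem (x := tF2 n i j hij * tF2 n j k hjk * tF2 n i j hij)
    (y := tF2 n i k hik) (Or.inl <| Or.inr ⟨i, j, k, hij, hjk, hik, rfl⟩)

theorem sandwich_tt2_right (hij : i ≠ j) (hjk : j ≠ k) (hik : i ≠ k) :
    sandwich (tt2 n j k hjk) (tt2 n i j hij) = tt2 n i k hik :=
  PresentedGroup.mk_eq_mk_of_mul_inv_mem (x := tF2 n j k hjk * tF2 n i j hij * tF2 n j k hjk)
    (y := tF2 n i k hik) (Or.inr ⟨i, j, k, hij, hjk, hik, rfl⟩)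

end SpinSym2

section Homomorphisms

variable {n : ℕ}

theorem finL_ne_finR (i : Fin (n - 1)) : finL n i ≠ finR n i := by
  simp [finL, finR]

/-- The images in `S̃'ₙ` of the generators of `S̃ₙ`. -/
def toSpinSym2Gen (n : ℕ) : Fin (n - 1) ⊕ Unit → SpinSym2 n :=
  Sum.elim (fun i => tt2 n (finL n i) (finR n i) (finL_ne_finR i)) fun _ => zt2 n

theorem lift_toSpinSym2Gen_eq_one :
    ∀ w ∈ spinRels n, FreeGroup.lift (toSpinSym2Gen n) w = 1 := by
  rintro _ ((((rfl | ⟨i, rfl⟩) | ⟨i, rfl⟩) | ⟨i, j, hij, rfl⟩) | ⟨i, j, hij, rfl⟩) <;>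
    simp only [toSpinSym2Gen, zF, tF, map_mul, map_inv, FreeGroup.lift_apply_of, Sum.elim_inl,
      Sum.elim_inr, mul_inv_eq_one]
  · exact zt2_mul_zt2
  · exact zt2_mul_tt2 _
  · exact tt2_mul_self _
  · rw [lt_abs] at hij
    apply tt2_mul_tt2_of_disjoint <;> simp only [finL, finR, ne_eq, Fin.mk.injEq] <;> omega
  · have hLR : finR n i = finL n j := Fin.ext hij.symm
    have hne : finL n i ≠ finR n j := by simp only [finL, finR, ne_eq, Fin.mk.injEq]; omega
    simp only [hLR]
    exact (sandwich_tt2_left _ _ hne).trans (sandwich_tt2_right _ _ hne).symm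

/-- The homomorphism `S̃ₙ → S̃'ₙ` with `z ↦ z'` and `τ̃ᵢ ↦ τ̃'_{i,i+1}`. -/
def toSpinSym2 (n : ℕ) : SpinSym n →* SpinSym2 n :=
  PresentedGroup.toGroup lift_toSpinSym2Gen_eq_one

theorem toSpinSym2_tt (i : Fin (n - 1)) :
    toSpinSym2 n (tt n i) = tt2 n (finL n i) (finR n i) (finL_ne_finR i) :=
  PresentedGroup.toGroup.of _

theorem toSpinSym2_zt : toSpinSym2 n (zt n) = zt2 n :=
  PresentedGroup.toGroup.of _

theorem toSpinSym2_ttN {k : ℕ} (hk : k + 1 < n) :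
    toSpinSym2 n (ttN n k) =
      tt2 n ⟨k, Nat.lt_of_succ_lt hk⟩ ⟨k + 1, hk⟩ (Fin.ne_of_val_ne k.lt_succ_self.ne) := by
  rw [ttN_of_lt hk, toSpinSym2_tt]
  rfl

theorem toSpinSym2_ttilCore {i j : ℕ} (hij : i < j) (hj : j < n) :
    toSpinSym2 n (ttilCore n i j) =
      tt2 n ⟨i, hij.trans hj⟩ ⟨j, hj⟩ (Fin.ne_of_val_ne hij.ne) := by
  induction hij using decreasing_induction_lt with
  | base i h =>
    cases h
    rw [ttilCore_succ, toSpinSym2_ttN hj]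
  | step i h ih =>
    rw [ttilCore_eq_sandwich h, map_sandwich, toSpinSym2_ttN (h.trans hj), ih, sandwich_tt2_left]

theorem toSpinSym2_ttil {i j : Fin n} (hij : i ≠ j) :
    toSpinSym2 n (ttil n i j) = tt2 n i j hij := by
  rcases hij.lt_or_gt with h | h
  · rw [ttil_of_lt h, toSpinSym2_ttilCore h j.2]
  · rw [ttil_comm (Fin.val_ne_of_ne hij), ttil_of_lt h, map_mul, toSpinSym2_zt,
      toSpinSym2_ttilCore h i.2, tt2_comm hij]

/-- The images in `S̃ₙ` of the generators of `S̃'ₙ`. -/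
def ofSpinSym2Gen (n : ℕ) : {q : Fin n × Fin n // q.1 ≠ q.2} ⊕ Unit → SpinSym n :=
  Sum.elim (fun q => ttil n q.1.1 q.1.2) fun _ => zt n

theorem lift_ofSpinSym2Gen_eq_one :
    ∀ w ∈ spinRels2 n, FreeGroup.lift (ofSpinSym2Gen n) w = 1 := by
  rintro _ ((((((rfl | ⟨i, j, h, rfl⟩) | ⟨i, j, h, rfl⟩) | ⟨i, j, h, rfl⟩) |
    ⟨i, j, k, l, hij, hkl, hik, hil, hjk, hjl, rfl⟩) | ⟨i, j, k, hij, hjk, hik, rfl⟩) |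
    ⟨i, j, k, hij, hjk, hik, rfl⟩) <;>
    simp only [ofSpinSym2Gen, zF2, tF2, map_mul, map_inv, FreeGroup.lift_apply_of, Sum.elim_inl,
      Sum.elim_inr, mul_inv_eq_one]
  · exact zt_mul_zt
  · exact commute_zt _
  · exact ttil_comm (Fin.val_ne_of_ne h)
  · exact ttil_mul_self h
  · exact ttil_mul_ttil_of_disjoint hij hkl hik hil hjk hjl
  · exact sandwich_ttil_left hij hjk hik
  · exact sandwich_ttil_right hij hjk hik

/-- The homomorphism `S̃'ₙ → S̃ₙ` with `z' ↦ z` and `τ̃'_{i,j} ↦ τ̃_{i,j}`. -/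
def ofSpinSym2 (n : ℕ) : SpinSym2 n →* SpinSym n :=
  PresentedGroup.toGroup lift_ofSpinSym2Gen_eq_one

theorem ofSpinSym2_tt2 {i j : Fin n} (h : i ≠ j) : ofSpinSym2 n (tt2 n i j h) = ttil n i j :=
  PresentedGroup.toGroup.of _

theorem ofSpinSym2_zt2 : ofSpinSym2 n (zt2 n) = zt n :=
  PresentedGroup.toGroup.of _

theorem ttil_finL_finR (i : Fin (n - 1)) : ttil n (finL n i) (finR n i) = tt n i := by
  rw [finL, finR, ttil_of_lt i.val.lt_succ_self, ttilCore_succ, ttN, dif_pos i.2]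

theorem ofSpinSym2_comp_toSpinSym2 : (ofSpinSym2 n).comp (toSpinSym2 n) = MonoidHom.id _ := by
  refine PresentedGroup.ext ?_
  rintro (i | _)
  · change ofSpinSym2 n (toSpinSym2 n (tt n i)) = tt n i
    rw [toSpinSym2_tt, ofSpinSym2_tt2, ttil_finL_finR]
  · change ofSpinSym2 n (toSpinSym2 n (zt n)) = zt n
    rw [toSpinSym2_zt, ofSpinSym2_zt2]

theorem toSpinSym2_comp_ofSpinSym2 : (toSpinSym2 n).comp (ofSpinSym2 n) = MonoidHom.id _ := by
  refine PresentedGroup.ext ?_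
  rintro (⟨⟨i, j⟩, h⟩ | _)
  · change toSpinSym2 n (ofSpinSym2 n (tt2 n i j h)) = tt2 n i j h
    rw [ofSpinSym2_tt2, toSpinSym2_ttil h]
  · change toSpinSym2 n (ofSpinSym2 n (zt2 n)) = zt2 n
    rw [ofSpinSym2_zt2, toSpinSym2_zt]

/-- The isomorphism `S̃ₙ ≃ S̃'ₙ` with `z ↦ z'` and `τ̃ᵢ ↦ τ̃'_{i,i+1}`. -/
def spinSymEquiv (n : ℕ) : SpinSym n ≃* SpinSym2 n :=
  MonoidHom.toMulEquiv _ _ ofSpinSym2_comp_toSpinSym2 toSpinSym2_comp_ofSpinSym2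

end Homomorphisms

theorem two_presentations (n : ℕ) (hn : 2 ≤ n) :
    ∃ φ : SpinSym n ≃* SpinSym2 n,
      (∀ i : Fin (n-1), φ (tt n i) = tt2 n (finL n i) (finR n i)
          (by simp only [finL, finR, ne_eq, Fin.mk.injEq]; omega)) ∧
      φ (zt n) = zt2 n ∧
      ∀ i j : Fin n, (h : i < j) →
        φ (ttil n i.val j.val) = tt2 n i j (Fin.ne_of_lt h) := by
  exact ⟨spinSymEquiv n, toSpinSym2_tt, toSpinSym2_zt, fun _ _ h => toSpinSym2_ttil h.ne⟩
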